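/- arXiv:2106.05753 — 4 statements merged into one kernel-verified Lean document; each statement's English description precedes it below -/
import Mathlib

section
/- Let x : [0,∞) → D be a Frank–Wolfe flow trajectory with mixing parameter γ(t) = c/(c+t) for some constant c ≥ 1. Then for every t ≥ 0, f(x(t)) − f* ≤ (c/(c+t))^c · (f(x(0)) − f*). -/
open scoped RealInnerProductSpace

/-- Continuous-time Frank–Wolfe flow rate: if `x` is a Frank–Wolfe flow
trajectory with mixing parameter `γ(t) = c/(c+t)`, `c ≥ 1`, then
`f(x(t)) − f* ≤ (c/(c+t))^c · (f(x(0)) − f*)` for all `t ≥ 0`. -/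
theorem fw_flow_rate
    {E : Type*} [NormedAddCommGroup E] [InnerProductSpace ℝ E] [FiniteDimensional ℝ E]
    (D : Set E) (hDcp : IsCompact D) (hDcv : Convex ℝ D) (hDne : D.Nonempty)
    (f : E → ℝ) (hconv : ConvexOn ℝ Set.univ f) (hdiff : Differentiable ℝ f)
    (fstar : ℝ) (hfstar : IsLeast (f '' D) fstar)
    (c : ℝ) (hc : 1 ≤ c)
    (x s : ℝ → E)
    (hxD : ∀ t : ℝ, 0 ≤ t → x t ∈ D)
    (hsD : ∀ t : ℝ, 0 ≤ t → s t ∈ D)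
    (hlmo : ∀ t : ℝ, 0 ≤ t → ∀ y ∈ D,
      ⟪gradient f (x t), s t⟫ ≤ ⟪gradient f (x t), y⟫)
    (hode : ∀ t : ℝ, 0 ≤ t →
      HasDerivWithinAt x ((c / (c + t)) • (s t - x t)) (Set.Ici 0) t) :
    ∀ t : ℝ, 0 ≤ t →
      f (x t) - fstar ≤ (c / (c + t)) ^ c * (f (x 0) - fstar) := by
  have hgrad : ∀ z v : E, HasFDerivAt f (fderiv ℝ f z) z ∧
      fderiv ℝ f z v = ⟪gradient f z, v⟫ := by
    intro z v
    refine ⟨(hdiff z).hasFDerivAt, ?_⟩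
    have h := (hdiff z).hasGradientAt.hasFDerivAt.fderiv
    rw [h]
    simp
  have hcvx : ∀ z y : E, fderiv ℝ f z (y - z) ≤ f y - f z := by
    intro z y
    have h1 : ConvexOn ℝ Set.univ (fun r : ℝ => f (AffineMap.lineMap z y r)) := by
      exact hconv.comp_affineMap (AffineMap.lineMap z y : ℝ →ᵃ[ℝ] E)
    have h2 : HasDerivAt (fun r : ℝ => f (AffineMap.lineMap z y r)) (fderiv ℝ f z (y - z)) 0 := by
      have h3 : HasDerivAt (fun r : ℝ => (AffineMap.lineMap z y r : E)) (y - z) 0 :=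
        AffineMap.hasDerivAt_lineMap
      have h4 : HasFDerivAt f (fderiv ℝ f z) ((AffineMap.lineMap z y : ℝ →ᵃ[ℝ] E) 0) := by
        simpa using (hdiff z).hasFDerivAt
      exact h4.comp_hasDerivAt (0:ℝ) h3
    have h5 := h1.le_slope_of_hasDerivAt (Set.mem_univ 0) (Set.mem_univ 1) zero_lt_one h2
    simpa [slope_def_field] using h5
  obtain ⟨y, hyD, hy⟩ := hfstar.1
  have hder : ∀ t : ℝ, 0 ≤ t → HasDerivWithinAt (fun t => (c + t) ^ c * (f (x t) - fstar))
      ((1 * c * (c + t) ^ (c - 1)) * (f (x t) - fstar) +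
        (c + t) ^ c * (fderiv ℝ f (x t) ((c / (c + t)) • (s t - x t)))) (Set.Ici 0) t := by
    intro t ht
    have h1 : HasDerivWithinAt (fun t : ℝ => (c + t) ^ c) (1 * c * (c + t) ^ (c - 1))
        (Set.Ici 0) t :=
      (((hasDerivAt_id t).const_add c).rpow_const (Or.inr hc)).hasDerivWithinAt
    have h2 : HasDerivWithinAt (fun t => f (x t) - fstar)
        (fderiv ℝ f (x t) ((c / (c + t)) • (s t - x t))) (Set.Ici 0) t :=
      ((hdiff (x t)).hasFDerivAt.comp_hasDerivWithinAt t (hode t ht)).sub_const fstar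
    exact h1.mul h2
  have hanti : AntitoneOn (fun t => (c + t) ^ c * (f (x t) - fstar)) (Set.Ici 0) := by
    refine antitoneOn_of_hasDerivWithinAt_nonpos (convex_Ici 0)
      (fun t ht => (hder t ht).continuousWithinAt)
      (fun t ht => (hder t (interior_subset ht)).mono interior_subset) ?_
    intro t ht
    have ht0 : 0 ≤ t := interior_subset ht
    have hp : 0 < c + t := by linarith
    have h1 := hlmo t ht0 y hyD
    have h2 := hcvx (x t) y
    rw [(hgrad (x t) (y - x t)).2, inner_sub_right] at h2
    rw [map_smul, (hgrad (x t) (s t - x t)).2, inner_sub_right, smul_eq_mul,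
      Real.rpow_sub_one hp.ne']
    have h3 : 0 ≤ c * (c + t) ^ c / (c + t) := by positivity
    have h4 : (f (x t) - fstar) + (⟪gradient f (x t), s t⟫ - ⟪gradient f (x t), x t⟫) ≤ 0 := by
      linarith
    have h5 := mul_nonpos_of_nonneg_of_nonpos h3 h4
    calc _ = _ := by ring
      _ ≤ 0 := h5
  intro t ht
  have h := hanti (Set.mem_Ici.2 le_rfl) (Set.mem_Ici.2 ht) ht
  simp only [add_zero] at h
  have hp : 0 < c + t := by linarith
  rw [Real.div_rpow (by linarith) hp.le, div_mul_eq_mul_div, le_div_iff₀ (by positivity)]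
  linarith
end

section
/- Let c > 1, D₄ ≥ 0, and let h : ℕ → ℝ be a nonnegative sequence satisfying h_{k+1} ≤ (1 − c/(c+k+1)) · h_k + D₄ · (c/(c+k+1))² for all k ≥ 0. Let H = max{h_0, D₄c²/(c−1)}. Then h_k ≤ H/(k+1) for all k ≥ 0. -/
/-- Recursive rate lemma: if `h` is nonnegative and
`h_{k+1} ≤ (1 − c/(c+k+1)) h_k + D₄ (c/(c+k+1))²` with `c > 1`, `D₄ ≥ 0`, then
`h_k ≤ H/(k+1)` where `H = max{h_0, D₄ c²/(c−1)}`. -/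
theorem rk_recursive_rate
    (c D₄ : ℝ) (hc : 1 < c) (hD₄ : 0 ≤ D₄)
    (h : ℕ → ℝ) (hnn : ∀ k : ℕ, 0 ≤ h k)
    (hrec : ∀ k : ℕ,
      h (k + 1) ≤ (1 - c / (c + k + 1)) * h k + D₄ * (c / (c + k + 1)) ^ 2) :
    ∀ k : ℕ, h k ≤ max (h 0) (D₄ * c ^ 2 / (c - 1)) / (k + 1) := by
  have hc1 : 0 < c - 1 := by linarith
  set H := max (h 0) (D₄ * c ^ 2 / (c - 1)) with hH
  have h0 : h 0 ≤ H := le_max_left _ _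
  have hHn : 0 ≤ H := le_trans (hnn 0) h0
  have hD : D₄ * c ^ 2 ≤ H * (c - 1) := (div_le_iff₀ hc1).1 (le_max_right _ _)
  intro k
  induction k with
  | zero => simpa using h0
  | succ k ih =>
    have hk : (0 : ℝ) ≤ k := Nat.cast_nonneg k
    have hs : 0 < c + k + 1 := by linarith
    have hk1 : (0 : ℝ) < k + 1 := by linarith
    have e1 : h k * (k + 1) ≤ H := (le_div_iff₀ hk1).1 ih
    have e2 : (1 - c / (c + k + 1)) * h k + D₄ * (c / (c + k + 1)) ^ 2
        = (h k * (k + 1) * (c + k + 1) + D₄ * c ^ 2) / (c + k + 1) ^ 2 := by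
      field_simp
      ring
    refine (hrec k).trans ?_
    rw [e2]
    push_cast
    rw [div_le_div_iff₀ (by positivity) (by positivity)]
    have e3 : h k * (k + 1) * (c + k + 1) + D₄ * c ^ 2 ≤ H * (c + k + 1) + H * (c - 1) :=
      add_le_add (mul_le_mul_of_nonneg_right e1 hs.le) hD
    have e4 := mul_le_mul_of_nonneg_right e3 (by linarith : (0 : ℝ) ≤ k + 1 + 1)
    refine e4.trans ?_
    nlinarith [mul_nonneg hHn (sq_nonneg (c - 1))]
end

section
/- Let x : ℕ → ℝ satisfy x_1 = 1 and x_{k+1} = |x_k − c_k/k| for all k ≥ 1, where c : ℕ → ℝ is a sequence of nonnegative reals such that for some constant C₁ > 0, for every k there exists k' > k with c_{k'} > C₁. Then for every K there exists k ≥ K with |x_k| ≥ C₁/(2k); that is, the smallest upper bound of |x_k| is at least of order 1/k. -/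
/-- `O(1/k)` lower-bound lemma: if `x_1 = 1`, `x_{k+1} = |x_k − c_k/k|`
for `k ≥ 1` with `c_k ≥ 0`, and the `c_k` exceed some `C₁ > 0` infinitely often, then for
every `K` there is `k ≥ K` with `|x_k| ≥ C₁/(2k)`. -/
theorem toy_recursion_lower_bound
    (x c : ℕ → ℝ) (hx1 : x 1 = 1)
    (hrec : ∀ k : ℕ, 1 ≤ k → x (k + 1) = |x k - c k / k|)
    (hcnn : ∀ k : ℕ, 0 ≤ c k)
    (C₁ : ℝ) (hC₁ : 0 < C₁)
    (hfreq : ∀ k : ℕ, ∃ k' : ℕ, k < k' ∧ C₁ < c k') :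
    ∀ K : ℕ, ∃ k : ℕ, K ≤ k ∧ C₁ / (2 * k) ≤ |x k| := by
  intro K
  obtain ⟨k, hk, hc⟩ := hfreq K
  by_cases h : C₁ / (2 * k) ≤ |x k|
  · exact ⟨k, hk.le, h⟩
  · push Not at h
    refine ⟨k + 1, by omega, ?_⟩
    have hk1 : 1 ≤ k := by omega
    have hkp : (0 : ℝ) < k := by exact_mod_cast hk1
    rw [hrec k hk1, abs_abs]
    have h1 : C₁ / k < c k / k := div_lt_div_of_pos_right hc hkp
    have h2 : C₁ / (2 * ((k + 1 : ℕ) : ℝ)) ≤ C₁ / (2 * k) := by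
      apply div_le_div_of_nonneg_left hC₁.le (by positivity)
      push_cast
      linarith
    have h3 : C₁ / k = 2 * (C₁ / (2 * k)) := by field_simp
    have h4 := neg_abs_le (x k - c k / k)
    have h5 := le_abs_self (x k)
    linarith
end

section
/- Consider the scalar toy Runge–Kutta Frank–Wolfe iteration with x^{(0)} = 1, and suppose 0 < q·(P^{(k)}β)_i < 1 for every i and every k ≥ 1. Then there exist a constant C₂ > 0 and an index k̃ such that |x^{(k)}| ≤ C₂/k for all k ≥ k̃. -/
open Matrix

lemma aux_p (q : ℕ) (A : Matrix (Fin q) (Fin q) ℝ) (hA : ∀ i j : Fin q, i ≤ j → A i j = 0)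
    (β g : Fin q → ℝ) (i : Fin q) :
    ((Matrix.diagonal g * (1 + Aᵀ * Matrix.diagonal g)⁻¹).mulVec β i)
      = g i * (β i - ∑ j, A j i *
        ((Matrix.diagonal g * (1 + Aᵀ * Matrix.diagonal g)⁻¹).mulVec β j)) := by
  set N := (1 + Aᵀ * Matrix.diagonal g) with hN
  have hdet : N.det = 1 := by
    rw [Matrix.det_of_upperTriangular]
    · apply Finset.prod_eq_one
      intro i _
      simp [hN, Matrix.mul_diagonal, hA i i le_rfl]
    · intro i j hij
      have h1 : j < i := hij
      simp [hN, Matrix.mul_diagonal, hA j i h1.le, Matrix.one_apply_ne h1.ne']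
  have hu : IsUnit N.det := by rw [hdet]; exact isUnit_one
  have hr : N.mulVec (N⁻¹.mulVec β) = β := by
    rw [Matrix.mulVec_mulVec, Matrix.mul_nonsing_inv _ hu, Matrix.one_mulVec]
  rw [← Matrix.mulVec_mulVec]
  generalize N⁻¹.mulVec β = r at hr ⊢
  have h2 := congrFun hr i
  rw [hN, Matrix.add_mulVec, Matrix.one_mulVec, ← Matrix.mulVec_mulVec] at h2
  simp only [Pi.add_apply, Matrix.mulVec_diagonal] at h2 ⊢
  have h3 : (Aᵀ.mulVec ((Matrix.diagonal g).mulVec r)) i = ∑ j, A j i * (g j * r j) := by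
    simp [Matrix.mulVec, dotProduct, Matrix.diagonal_apply]
  rw [h3] at h2
  rw [← h2]; ring

lemma aux_seq (y : ℕ → ℝ) (hy : ∀ k, 0 ≤ y k) (C a : ℝ) (hC : 0 < C) (ha : 0 < a) (K : ℕ)
    (h : ∀ k : ℕ, 1 ≤ k → K ≤ k → y (k + 1) ≤ C / ((k : ℝ) + 1) ∨ y (k + 1) ≤ y k - a / k) :
    ∃ n : ℕ, ∀ k : ℕ, n ≤ k → y k ≤ C / k := by
  obtain ⟨L, hL⟩ := exists_nat_ge (C / a)
  set N := K + L + 1 with hN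
  have hent : ∃ m, N ≤ m ∧ y m ≤ C / m := by
    by_contra hcon
    push Not at hcon
    have hd : ∀ k, N ≤ k → y (k + 1) ≤ y k - a / k := by
      intro k hk
      rcases h k (by omega) (by omega) with h1 | h1
      · have := hcon (k + 1) (by omega)
        push_cast at this
        linarith
      · exact h1
    have hs : ∀ n, y (N + n) ≤ y N - a * ((∑ i ∈ Finset.range (N + n), 1 / (i : ℝ))
        - ∑ i ∈ Finset.range N, 1 / (i : ℝ)) := by
      intro n
      induction n with
      | zero => simp
      | succ n ih =>
        have := hd (N + n) (by omega)
        rw [← add_assoc, Finset.sum_range_succ]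
        have e : a * (1 / ((N + n : ℕ) : ℝ)) = a / ((N + n : ℕ) : ℝ) := by ring
        nlinarith
    have ht : Filter.Tendsto (fun n => ∑ i ∈ Finset.range n, 1 / (i : ℝ)) Filter.atTop Filter.atTop :=
      (not_summable_iff_tendsto_nat_atTop_of_nonneg (fun i => by positivity)).1
        Real.not_summable_one_div_natCast
    obtain ⟨n, hn1, hn⟩ := ((Filter.eventually_ge_atTop N).and (ht.eventually_gt_atTop
      (y N / a + ∑ i ∈ Finset.range N, 1 / (i : ℝ)))).exists
    obtain ⟨m, rfl⟩ := Nat.exists_eq_add_of_le hn1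
    have h1 := hs m
    have h2 := hy (N + m)
    have h3 : y N / a < (∑ i ∈ Finset.range (N + m), 1 / (i : ℝ))
        - ∑ i ∈ Finset.range N, 1 / (i : ℝ) := by linarith
    rw [div_lt_iff₀ ha] at h3
    linarith
  obtain ⟨m, hm, hym⟩ := hent
  refine ⟨m, fun k hk => ?_⟩
  induction k, hk using Nat.le_induction with
  | base => exact hym
  | succ k hk ih =>
    rcases h k (by omega) (by omega) with h1 | h1
    · push_cast; exact h1
    · push_cast
      have hk0 : (0 : ℝ) < k := by
        have : 0 < k := by omega
        exact_mod_cast this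
      have hLk : (L : ℝ) ≤ k := by
        have : L ≤ k := by omega
        exact_mod_cast this
      have hCa : C ≤ a * (k + 1) := by
        have := (div_le_iff₀ ha).1 hL
        nlinarith
      have : C / k - a / k ≤ C / ((k : ℝ) + 1) := by
        rw [← sub_div, div_le_div_iff₀ hk0 (by positivity)]
        nlinarith
      linarith

lemma aux_sign_abs (u : ℝ) : |u.sign| ≤ 1 := by
  rcases Real.sign_apply_eq u with h | h | h <;> rw [h] <;> simp

/-- one step of the iteration away from zero -/
lemma aux_far (x S : ℝ) (hx : x ≠ 0) (hS : 0 < S) (hS1 : S < 1) :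
    |(1 - S) * x - S * x.sign| ≤ S ∨ |(1 - S) * x - S * x.sign| ≤ |x| - S := by
  rcases lt_or_gt_of_ne hx with h | h
  · rw [Real.sign_of_neg h, abs_of_neg h]
    rcases le_total 0 ((1 - S) * x - S * (-1)) with h1 | h1
    · left; rw [abs_of_nonneg h1]; nlinarith
    · right; rw [abs_of_nonpos h1]; nlinarith
  · rw [Real.sign_of_pos h, abs_of_pos h]
    rcases le_total 0 ((1 - S) * x - S * 1) with h1 | h1
    · right; rw [abs_of_nonneg h1]; nlinarith
    · left; rw [abs_of_nonpos h1]; nlinarith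

lemma aux_sign_eq (x u d : ℝ) (h : |u - x| ≤ d) (hd : d < |x|) : u.sign = x.sign := by
  rw [abs_le] at h
  rcases lt_trichotomy x 0 with hx | hx | hx
  · rw [abs_of_neg hx] at hd
    rw [Real.sign_of_neg hx, Real.sign_of_neg (by linarith)]
  · subst hx
    rw [abs_zero] at hd; linarith
  · rw [abs_of_pos hx] at hd
    rw [Real.sign_of_pos hx, Real.sign_of_pos (by linarith)]

/-- Upper bound for the scalar toy Runge–Kutta Frank–Wolfe iteration:
if `0 < q(P^{(k)}β)_i < 1` for all `i` and all `k ≥ 1`, then there are `C₂ > 0` and `k̃`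
such that `|x^{(k)}| ≤ C₂/k` for all `k ≥ k̃`. -/
theorem rk_toy_upper_bound
    (q : ℕ) (A : Matrix (Fin q) (Fin q) ℝ) (hA : ∀ i j : Fin q, i ≤ j → A i j = 0)
    (β : Fin q → ℝ) (hβ : ∑ i, β i = 1)
    (ω : Fin q → ℝ) (hω : ∀ i, 0 ≤ ω i)
    (c : ℝ) (hc : 1 ≤ c)
    (x : ℕ → ℝ) (ξ : ℕ → Fin q → ℝ) (xbar : ℕ → Fin q → ℝ)
    (hx0 : x 0 = 1)
    (hxbar : ∀ k : ℕ, 1 ≤ k → ∀ i : Fin q, xbar k i = x k + ∑ j, A i j * ξ k j)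
    (hξ : ∀ k : ℕ, 1 ≤ k → ∀ i : Fin q,
      ξ k i = (c / (c + k + ω i)) * (-(xbar k i).sign - xbar k i))
    (hstep : ∀ k : ℕ, 1 ≤ k → x (k + 1) = x k + ∑ i, β i * ξ k i)
    (hP : ∀ k : ℕ, 1 ≤ k → ∀ i : Fin q,
      0 < (q : ℝ) * ((Matrix.diagonal (fun i => c / (c + k + ω i)) *
            (1 + Aᵀ * Matrix.diagonal (fun i => c / (c + k + ω i)))⁻¹).mulVec β i) ∧
      (q : ℝ) * ((Matrix.diagonal (fun i => c / (c + k + ω i)) *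
            (1 + Aᵀ * Matrix.diagonal (fun i => c / (c + k + ω i)))⁻¹).mulVec β i) < 1) :
    ∃ C₂ : ℝ, 0 < C₂ ∧ ∃ ktilde : ℕ, ∀ k : ℕ, ktilde ≤ k → |x k| ≤ C₂ / k := by
  -- the weights
  obtain ⟨p, hp⟩ : ∃ p : ℕ → Fin q → ℝ, ∀ k i, p k i =
      ((Matrix.diagonal (fun i => c / (c + k + ω i)) *
            (1 + Aᵀ * Matrix.diagonal (fun i => c / (c + k + ω i)))⁻¹).mulVec β i) :=
    ⟨_, fun _ _ => rfl⟩
  have hpe : ∀ k i, p k i = (c / (c + k + ω i)) * (β i - ∑ j, A j i * p k j) := by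
    intro k i
    simp only [hp]
    exact aux_p q A hA β (fun i => c / (c + k + ω i)) i
  simp only [← hp] at hP
  clear hp
  have hq : 0 < q := by
    rcases Nat.eq_zero_or_pos q with h | h
    · subst h; simp at hβ
    · exact h
  have hqR : (0 : ℝ) < q := by exact_mod_cast hq
  have hq1 : (1 : ℝ) ≤ q := by exact_mod_cast hq
  have hp0 : ∀ k, 1 ≤ k → ∀ i, 0 < p k i := fun k hk i =>
    (mul_pos_iff_of_pos_left hqR).1 (hP k hk i).1
  have hpq : ∀ k, 1 ≤ k → ∀ i, p k i < 1 / q := fun k hk i => by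
    rw [lt_div_iff₀ hqR, mul_comm]; exact (hP k hk i).2
  have hp1 : ∀ k, 1 ≤ k → ∀ i, p k i < 1 := fun k hk i => by
    have := (hP k hk i).2
    nlinarith [hp0 k hk i]
  haveI : Nonempty (Fin q) := ⟨⟨0, hq⟩⟩
  have hc0 : 0 < c := by linarith
  have hkpos : ∀ k : ℕ, 1 ≤ k → (0 : ℝ) < k := fun k hk => by exact_mod_cast hk
  have hden : ∀ k : ℕ, 1 ≤ k → ∀ i, 0 < c + k + ω i := fun k hk i => by
    have := hkpos k hk
    have := hω i
    linarith
  have hg0 : ∀ k : ℕ, 1 ≤ k → ∀ i, 0 < c / (c + k + ω i) := fun k hk i =>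
    div_pos hc0 (hden k hk i)
  have hgk : ∀ k : ℕ, 1 ≤ k → ∀ i, c / (c + k + ω i) ≤ c / k := fun k hk i =>
    div_le_div_of_nonneg_left hc0.le (hkpos k hk) (by have := hω i; linarith)
  set S : ℕ → ℝ := fun k => ∑ i, p k i with hS
  have hS0 : ∀ k, 1 ≤ k → 0 < S k := fun k hk =>
    Finset.sum_pos (fun i _ => hp0 k hk i) Finset.univ_nonempty
  have hS1 : ∀ k, 1 ≤ k → S k < 1 := fun k hk => by
    have : S k < ∑ i : Fin q, (1 / (q : ℝ)) :=
      Finset.sum_lt_sum_of_nonempty Finset.univ_nonempty (fun i _ => hpq k hk i)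
    rw [Finset.sum_const, Finset.card_univ, Fintype.card_fin, nsmul_eq_mul,
      mul_one_div_cancel hqR.ne'] at this
    exact this
  -- the reduced recursion
  have hrec : ∀ k, 1 ≤ k → x (k + 1) = (1 - S k) * x k - ∑ i, p k i * (xbar k i).sign := by
    intro k hk
    rw [hstep k hk]
    have e1 : ∀ i, β i * ξ k i = p k i * (-(xbar k i).sign - xbar k i)
        + ∑ j, p k j * (A j i * ξ k i) := by
      intro i
      have h1 := hpe k i
      have h2 := hξ k hk i
      have h3 : ∑ j, p k j * (A j i * ξ k i) = (∑ j, A j i * p k j) * ξ k i := by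
        rw [Finset.sum_mul]; exact Finset.sum_congr rfl fun j _ => by ring
      rw [h3, h1, h2]; ring
    rw [Finset.sum_congr rfl fun i _ => e1 i, Finset.sum_add_distrib, Finset.sum_comm]
    have e2 : ∀ j, ∑ i, p k j * (A j i * ξ k i) = p k j * (xbar k j - x k) := by
      intro j
      rw [← Finset.mul_sum, hxbar k hk j]; ring
    rw [Finset.sum_congr rfl fun j _ => e2 j, ← Finset.sum_add_distrib, hS]
    simp only
    rw [sub_mul, Finset.sum_mul, one_mul, sub_sub, ← Finset.sum_add_distrib, sub_eq_add_neg,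
      ← Finset.sum_neg_distrib]
    congr 1
    exact Finset.sum_congr rfl fun j _ => by ring
  have hsg : ∀ k, 1 ≤ k → |∑ i, p k i * (xbar k i).sign| ≤ S k := by
    intro k hk
    refine (Finset.abs_sum_le_sum_abs _ _).trans (Finset.sum_le_sum fun i _ => ?_)
    rw [abs_mul, abs_of_pos (hp0 k hk i)]
    exact mul_le_of_le_one_right (hp0 k hk i).le (aux_sign_abs _)
  have hrecle : ∀ k, 1 ≤ k → |x (k + 1)| ≤ (1 - S k) * |x k| + S k := by
    intro k hk
    rw [hrec k hk]
    refine (abs_sub _ _).trans ?_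
    rw [abs_mul, abs_of_pos (sub_pos.2 (hS1 k hk))]
    have := hsg k hk
    linarith
  -- boundedness
  obtain ⟨M, hM1, hM⟩ : ∃ M : ℝ, 1 ≤ M ∧ ∀ k, 1 ≤ k → |x k| ≤ M := by
    refine ⟨max |x 1| 1, le_max_right _ _, fun k hk => ?_⟩
    induction k, hk using Nat.le_induction with
    | base => exact le_max_left _ _
    | succ k hk ih =>
      have h1 := hrecle k hk
      have h2 : (1 : ℝ) ≤ max |x 1| 1 := le_max_right _ _
      generalize max |x 1| 1 = M at *
      nlinarith [hS0 k hk, hS1 k hk]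
  have hB : ∀ n : ℕ, ∀ i : Fin q, i.val = n → ∃ B : ℝ, 0 ≤ B ∧ ∀ k : ℕ, 1 ≤ k → |ξ k i| ≤ B / k := by
    intro n
    induction n using Nat.strong_induction_on with
    | _ n ih =>
    intro i hi
    have ih' : ∀ j : Fin q, ∃ B : ℝ, 0 ≤ B ∧ (j < i → ∀ k : ℕ, 1 ≤ k → |ξ k j| ≤ B / k) := by
      intro j
      by_cases hj : j < i
      · obtain ⟨B, h0, h1⟩ := ih j.val (by rw [← hi]; exact hj) j rfl
        exact ⟨B, h0, fun _ => h1⟩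
      · exact ⟨0, le_rfl, fun h => absurd h hj⟩
    choose B hB0 hB using ih'
    have hQ : 0 ≤ ∑ j, |A i j| * B j :=
      Finset.sum_nonneg fun j _ => mul_nonneg (abs_nonneg _) (hB0 j)
    refine ⟨c * (1 + (M + ∑ j, |A i j| * B j)), by positivity, fun k hk => ?_⟩
    have hk1 : (1 : ℝ) ≤ k := by exact_mod_cast hk
    have hx1 : |xbar k i| ≤ M + ∑ j, |A i j| * B j := by
      rw [hxbar k hk i]
      refine (abs_add_le _ _).trans (add_le_add (hM k hk) ?_)
      refine (Finset.abs_sum_le_sum_abs _ _).trans (Finset.sum_le_sum fun j _ => ?_)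
      rw [abs_mul]
      rcases lt_or_ge j i with hj | hj
      · refine mul_le_mul_of_nonneg_left ((hB j hj k hk).trans ?_) (abs_nonneg _)
        exact div_le_self (hB0 j) hk1
      · rw [hA i j hj]; simp
    rw [hξ k hk i, abs_mul, abs_of_pos (hg0 k hk i), mul_div_right_comm]
    refine mul_le_mul (hgk k hk i) ?_ (abs_nonneg _) (by positivity)
    refine (abs_sub _ _).trans ?_
    rw [abs_neg]
    exact add_le_add (aux_sign_abs _) hx1
  have hB' : ∀ i : Fin q, ∃ B : ℝ, 0 ≤ B ∧ ∀ k : ℕ, 1 ≤ k → |ξ k i| ≤ B / k :=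
    fun i => hB i.val i rfl
  clear hB
  choose B hB0 hB using hB'
  obtain ⟨D, hD0, hD⟩ : ∃ D : ℝ, 0 ≤ D ∧ ∀ k : ℕ, 1 ≤ k → ∀ i, |xbar k i - x k| ≤ D / k := by
    refine ⟨∑ i, ∑ j, |A i j| * B j, Finset.sum_nonneg fun i _ => Finset.sum_nonneg fun j _ =>
      mul_nonneg (abs_nonneg _) (hB0 j), fun k hk i => ?_⟩
    have hk0 := hkpos k hk
    have h1 : |xbar k i - x k| ≤ (∑ j, |A i j| * B j) / k := by
      rw [hxbar k hk i, add_sub_cancel_left, Finset.sum_div]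
      refine (Finset.abs_sum_le_sum_abs _ _).trans (Finset.sum_le_sum fun j _ => ?_)
      rw [abs_mul, mul_div_assoc]
      exact mul_le_mul_of_nonneg_left (hB j k hk) (abs_nonneg _)
    refine h1.trans (div_le_div_of_nonneg_right ?_ hk0.le)
    exact Finset.single_le_sum (f := fun i => ∑ j, |A i j| * B j)
      (fun i _ => Finset.sum_nonneg fun j _ =>
      mul_nonneg (abs_nonneg _) (hB0 j)) (Finset.mem_univ i)
  -- bounds for p and S
  obtain ⟨E, hE0, hpE⟩ : ∃ E : Fin q → ℝ, (∀ i, 0 ≤ E i) ∧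
      ∀ k : ℕ, 1 ≤ k → ∀ i, p k i ≤ E i / k := by
    refine ⟨fun i => c * (|β i| + ∑ j, |A j i|), fun i => by positivity, fun k hk i => ?_⟩
    have hk0 := hkpos k hk
    rw [hpe k i, mul_div_right_comm]
    have h1 : β i - ∑ j, A j i * p k j ≤ |β i| + ∑ j, |A j i| := by
      have h2 : |∑ j, A j i * p k j| ≤ ∑ j, |A j i| := by
        refine (Finset.abs_sum_le_sum_abs _ _).trans (Finset.sum_le_sum fun j _ => ?_)
        rw [abs_mul, abs_of_pos (hp0 k hk j)]
        exact mul_le_of_le_one_right (abs_nonneg _) (hp1 k hk j).le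
      have := neg_le_of_abs_le h2
      have := le_abs_self (β i)
      linarith
    calc _ ≤ c / (c + k + ω i) * (|β i| + ∑ j, |A j i|) :=
          mul_le_mul_of_nonneg_left h1 (hg0 k hk i).le
      _ ≤ _ := mul_le_mul_of_nonneg_right (hgk k hk i) (by positivity)
  have hSE : ∀ k : ℕ, 1 ≤ k → S k ≤ (∑ i, E i) / k := by
    intro k hk
    rw [Finset.sum_div]
    exact Finset.sum_le_sum fun i _ => hpE k hk i
  have hEs : 0 ≤ ∑ i, E i := Finset.sum_nonneg fun i _ => hE0 i
  obtain ⟨F, hF0, hF⟩ : ∃ F : ℝ, 0 ≤ F ∧ ∀ k : ℕ, 1 ≤ k → c / k - F / (k * k) ≤ S k := by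
    refine ⟨∑ i, (c * (c + ω i) * |β i| + c * ∑ j, |A j i| * E j), ?_, fun k hk => ?_⟩
    · refine Finset.sum_nonneg fun i _ => add_nonneg ?_ ?_
      · have := hω i; positivity
      · exact mul_nonneg hc0.le (Finset.sum_nonneg fun j _ => mul_nonneg (abs_nonneg _) (hE0 j))
    · have hk0 := hkpos k hk
      have e : c / k = ∑ i, c / k * β i := by rw [← Finset.mul_sum, hβ, mul_one]
      rw [e, Finset.sum_div, ← Finset.sum_sub_distrib]
      refine Finset.sum_le_sum fun i _ => ?_
      rw [hpe k i, add_div]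
      have h1 : (c / k - c / (c + k + ω i)) * β i ≤ c * (c + ω i) * |β i| / (k * k) := by
        have h2 : c / k - c / (c + k + ω i) ≤ c * (c + ω i) / (k * k) := by
          rw [div_sub_div _ _ hk0.ne' (hden k hk i).ne',
            div_le_div_iff₀ (mul_pos hk0 (hden k hk i)) (mul_pos hk0 hk0)]
          have : c * (c + k + ω i) - k * c = c * (c + ω i) := by ring
          rw [this]
          have h5 := hω i
          refine mul_le_mul_of_nonneg_left ?_ (by positivity)
          exact mul_le_mul_of_nonneg_left (by linarith) hk0.le
        have h3 : 0 ≤ c / k - c / (c + k + ω i) := sub_nonneg.2 (hgk k hk i)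
        calc _ ≤ (c / k - c / (c + k + ω i)) * |β i| :=
              mul_le_mul_of_nonneg_left (le_abs_self _) h3
          _ ≤ c * (c + ω i) / (k * k) * |β i| := mul_le_mul_of_nonneg_right h2 (abs_nonneg _)
          _ = _ := by ring
      have h4 : c / (c + k + ω i) * (∑ j, A j i * p k j)
          ≤ (c * ∑ j, |A j i| * E j) / (k * k) := by
        have h5 : (∑ j, A j i * p k j) ≤ (∑ j, |A j i| * E j) / k := by
          rw [Finset.sum_div]
          refine Finset.sum_le_sum fun j _ => ?_
          rw [mul_div_assoc]
          exact mul_le_mul (le_abs_self _) (hpE k hk j) (hp0 k hk j).le (abs_nonneg _)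
        have h6 : 0 ≤ (∑ j, |A j i| * E j) / k :=
          div_nonneg (Finset.sum_nonneg fun j _ => mul_nonneg (abs_nonneg _) (hE0 j)) hk0.le
        calc _ ≤ c / (c + k + ω i) * ((∑ j, |A j i| * E j) / k) :=
              mul_le_mul_of_nonneg_left h5 (hg0 k hk i).le
          _ ≤ c / k * ((∑ j, |A j i| * E j) / k) := mul_le_mul_of_nonneg_right (hgk k hk i) h6
          _ = _ := by rw [div_mul_div_comm]
      rw [mul_sub]
      rw [sub_mul] at h1
      linarith
  obtain ⟨K, hK⟩ := exists_nat_ge (2 * F / c)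
  have hSl : ∀ k : ℕ, 1 ≤ k → K ≤ k → (c / 2) / k ≤ S k := by
    intro k hk hKk
    have hk0 := hkpos k hk
    refine le_trans ?_ (hF k hk)
    have hKk' : (K : ℝ) ≤ k := by exact_mod_cast hKk
    have h1 : 2 * F ≤ c * k := by
      have := (div_le_iff₀ hc0).1 (hK.trans hKk')
      linarith
    have h2 : F / (k * k) ≤ (c / 2) / k := by
      rw [div_le_div_iff₀ (mul_pos hk0 hk0) hk0]
      nlinarith
    have h3 : c / k = (c / 2) / k + (c / 2) / k := by ring
    linarith
  set G := D + ∑ i, E i + 1 with hG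
  have hGk : ∀ k : ℕ, 1 ≤ k → (D + ∑ i, E i) / k ≤ 2 * G / ((k : ℝ) + 1) := by
    intro k hk
    have hk0 := hkpos k hk
    have hk1 : (1 : ℝ) ≤ k := by exact_mod_cast hk
    rw [div_le_div_iff₀ hk0 (by positivity)]
    nlinarith
  obtain ⟨n, hn⟩ := aux_seq (fun k => |x k|) (fun k => abs_nonneg _) (2 * G) (c / 2)
    (by positivity) (by positivity) K (by
      intro k hk hKk
      have hk0 := hkpos k hk
      have h0 := hGk k hk
      rw [add_div] at h0
      have hDk : 0 ≤ D / k := by positivity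
      rcases le_or_gt |x k| (D / k) with h | h
      · left
        have h1 := hrecle k hk
        have h2 := hSE k hk
        have h3 : (1 - S k) * |x k| ≤ |x k| :=
          mul_le_of_le_one_left (abs_nonneg _) (by linarith [hS0 k hk])
        linarith
      · have hs : ∑ i, p k i * (xbar k i).sign = S k * (x k).sign := by
          rw [hS, Finset.sum_mul]
          exact Finset.sum_congr rfl fun i _ => by rw [aux_sign_eq _ _ _ (hD k hk i) h]
        have hx : x k ≠ 0 := by
          intro h1; rw [h1, abs_zero] at h; linarith
        rw [hrec k hk, hs]
        rcases aux_far (x k) (S k) hx (hS0 k hk) (hS1 k hk) with h1 | h1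
        · left
          have h2 := hSE k hk
          linarith
        · right
          have := hSl k hk hKk
          linarith)
  exact ⟨2 * G, by positivity, n, hn⟩
end
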